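/- For an odd integer m ≥ 3, define g_m(y) = (−1)^{(m+1)/2} · ∫_0^y cos(mt)/(2·cos(t)) dt. Then for every odd integer m ≥ 43 and every y ∈ [0, π/2], one has g_m(y) ≤ 0.22. -/

import Mathlib

open Real intervalIntegral

noncomputable def gOsc (m : ℕ) (y : ℝ) : ℝ :=
  (-1 : ℝ) ^ ((m + 1) / 2) * ∫ t in (0:ℝ)..y, Real.cos (m * t) / (2 * Real.cos t)

/-!
Write `m = 2k + 1` and substitute `t = π / 2 - x`: up to sign, `cos (m t) / cos t` becomes the
Dirichlet kernel `sin (m x) / sin x`, so that `g_m(y) = (F_k(π / 2 - y) - π / 2) / 2`, where `F_k`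
is the primitive of the kernel vanishing at `0`. The first peak of `F_k`, at `π / m`, is its maximum
on `[0, π / 2]`, because `1 / sin` decreases there. Rescaling the first arch to `[0, π]` turns the
kernel into `sin u / (m sin (u / m))`, which decreases in `m` by concavity of the sine; so the
height of the first peak is largest at the smallest admissible index, `m = 3`, where
`F_1(π / 3) = π / 3 + √3 / 2`.
-/

/-- The Dirichlet kernel `sin ((2k + 1) x) / sin x`, that is, the usual `D_k` evaluated at `2x`.
It is encoded as a cosine polynomial in order to be defined also where `sin x = 0`. -/
noncomputable def dirichletKernel (k : ℕ) (x : ℝ) : ℝ :=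
  1 + ∑ j ∈ Finset.range k, 2 * cos (2 * (j + 1) * x)

/-- The primitive of `dirichletKernel k` that vanishes at `0`; its oscillation is what bounds
`gOsc (2 * k + 1)`. -/
noncomputable def dirichletPrimitive (k : ℕ) (x : ℝ) : ℝ :=
  x + ∑ j ∈ Finset.range k, sin (2 * (j + 1) * x) / (j + 1)

lemma continuous_dirichletKernel (k : ℕ) : Continuous (dirichletKernel k) := by
  unfold dirichletKernel
  fun_prop

lemma dirichletKernel_mul_sin (k : ℕ) (x : ℝ) :
    dirichletKernel k x * sin x = sin ((2 * k + 1) * x) := by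
  induction k with
  | zero => simp [dirichletKernel]
  | succ k ih =>
    have hsucc : dirichletKernel (k + 1) x = dirichletKernel k x + 2 * cos (2 * (k + 1) * x) := by
      simp only [dirichletKernel, Finset.sum_range_succ, add_assoc]
    have hleft : (2 * (k : ℝ) + 1) * x = 2 * (k + 1) * x - x := by ring
    have hright : (2 * ((k + 1 : ℕ) : ℝ) + 1) * x = 2 * (k + 1) * x + x := by push_cast; ring
    rw [hsucc, add_mul, ih, hleft, hright, sin_sub, sin_add]
    ring

lemma dirichletKernel_eq_div (k : ℕ) {x : ℝ} (hx : sin x ≠ 0) :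
    dirichletKernel k x = sin ((2 * k + 1) * x) / sin x :=
  eq_div_of_mul_eq hx (dirichletKernel_mul_sin k x)

lemma dirichletKernel_pi_div_two_sub_mul_cos (k : ℕ) (t : ℝ) :
    dirichletKernel k (π / 2 - t) * cos t = (-1) ^ k * cos ((2 * k + 1) * t) := by
  have harg : (2 * (k : ℝ) + 1) * (π / 2 - t) = π / 2 - (2 * k + 1) * t + k * π := by ring
  rw [← sin_pi_div_two_sub t, dirichletKernel_mul_sin, harg, sin_add_nat_mul_pi,
    sin_pi_div_two_sub]

lemma hasDerivAt_dirichletPrimitive (k : ℕ) (x : ℝ) :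
    HasDerivAt (dirichletPrimitive k) (dirichletKernel k x) x := by
  refine (hasDerivAt_id x).add (HasDerivAt.fun_sum fun j _ ↦ ?_)
  convert! (((hasDerivAt_id x).const_mul (2 * ((j : ℝ) + 1))).sin).div_const ((j : ℝ) + 1) using 1
  simp only [id]
  field_simp

lemma continuous_dirichletPrimitive (k : ℕ) : Continuous (dirichletPrimitive k) :=
  continuous_iff_continuousAt.2 fun x ↦ (hasDerivAt_dirichletPrimitive k x).continuousAt

lemma integral_dirichletKernel (k : ℕ) (a b : ℝ) :
    ∫ x in a..b, dirichletKernel k x = dirichletPrimitive k b - dirichletPrimitive k a :=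
  integral_eq_sub_of_hasDerivAt (fun x _ ↦ hasDerivAt_dirichletPrimitive k x)
    ((continuous_dirichletKernel k).intervalIntegrable a b)

lemma dirichletPrimitive_zero (k : ℕ) : dirichletPrimitive k 0 = 0 := by
  simp [dirichletPrimitive]

lemma dirichletPrimitive_pi_div_two (k : ℕ) : dirichletPrimitive k (π / 2) = π / 2 := by
  refine add_eq_left.2 (Finset.sum_eq_zero fun j _ ↦ ?_)
  have harg : 2 * ((j : ℝ) + 1) * (π / 2) = ((j + 1 : ℕ) : ℝ) * π := by push_cast; ring
  rw [harg, sin_nat_mul_pi, zero_div]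

lemma dirichletPrimitive_one_pi_div_three : dirichletPrimitive 1 (π / 3) = π / 3 + √3 / 2 := by
  have harg : 2 * (π / 3) = π - π / 3 := by ring
  simp [dirichletPrimitive, harg, sin_pi_sub]

lemma monotoneOn_dirichletPrimitive (k : ℕ) :
    MonotoneOn (dirichletPrimitive k) (Set.Icc 0 (π / (2 * k + 1))) := by
  refine monotoneOn_of_hasDerivWithinAt_nonneg (convex_Icc _ _)
    (continuous_dirichletPrimitive k).continuousOn
    (fun x _ ↦ (hasDerivAt_dirichletPrimitive k x).hasDerivWithinAt) fun x hx ↦ ?_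
  rw [interior_Icc] at hx
  have hx_pos := hx.1
  have hx_pi : (2 * k + 1) * x ≤ π := (le_div_iff₀' (by positivity)).1 hx.2.le
  have hsin : 0 < sin x :=
    sin_pos_of_pos_of_lt_pi hx_pos (hx.2.trans_le (div_le_self pi_pos.le (by simp)))
  rw [dirichletKernel_eq_div k hsin.ne']
  exact div_nonneg (sin_nonneg_of_nonneg_of_le_pi (by positivity) hx_pi) hsin.le

/-- The added term is chosen so that its derivative cancels the kernel `sin ((2k + 1) t) / sin t`,
leaving only the contribution of the decreasing factor `1 / sin`. -/
lemma antitoneOn_dirichletPrimitive_add_cos_add_one_div (k : ℕ) :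
    AntitoneOn (fun t ↦ dirichletPrimitive k t +
      (cos ((2 * k + 1) * t) + 1) / ((2 * k + 1) * sin t)) (Set.Ioc 0 (π / 2)) := by
  set m : ℝ := 2 * k + 1 with hm
  have hm_pos : 0 < m := by positivity
  have hsin {t : ℝ} (ht : t ∈ Set.Ioc 0 (π / 2)) : 0 < sin t :=
    sin_pos_of_pos_of_lt_pi ht.1 (by linarith [ht.2, pi_pos])
  have hderiv {t : ℝ} (ht : t ∈ Set.Ioc 0 (π / 2)) :
      HasDerivAt (fun t ↦ dirichletPrimitive k t + (cos (m * t) + 1) / (m * sin t))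
        (-((cos (m * t) + 1) * cos t / (m * sin t ^ 2))) t := by
    have hst := hsin ht
    convert! (hasDerivAt_dirichletPrimitive k t).add
      (((((hasDerivAt_id t).const_mul m).cos).add_const 1).div
        ((hasDerivAt_sin t).const_mul m) (by positivity)) using 1
    rw [dirichletKernel_eq_div k hst.ne']
    simp only [id, ← hm]
    field_simp
    ring
  refine antitoneOn_of_hasDerivWithinAt_nonpos (convex_Ioc _ _)
    (fun t ht ↦ (hderiv ht).continuousAt.continuousWithinAt)
    (fun t ht ↦ (hderiv (interior_subset ht)).hasDerivWithinAt) fun t ht ↦ ?_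
  have ht' := interior_subset ht
  have hcos : 0 ≤ cos t := cos_nonneg_of_mem_Icc ⟨by linarith [ht'.1, pi_pos], ht'.2⟩
  have hcos_add : 0 ≤ cos (m * t) + 1 := by linarith [neg_one_le_cos (m * t)]
  exact neg_nonpos.2 (by positivity)

lemma dirichletPrimitive_le_first_peak (k : ℕ) {x : ℝ} (hx : x ∈ Set.Icc 0 (π / 2)) :
    dirichletPrimitive k x ≤ dirichletPrimitive k (π / (2 * k + 1)) := by
  have hpeak_pos : 0 < π / (2 * k + 1) := by positivity
  rcases le_total x (π / (2 * k + 1)) with hle | hle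
  · exact monotoneOn_dirichletPrimitive k ⟨hx.1, hle⟩ ⟨hpeak_pos.le, le_rfl⟩ hle
  have hanti := antitoneOn_dirichletPrimitive_add_cos_add_one_div k ⟨hpeak_pos, hle.trans hx.2⟩
    ⟨hpeak_pos.trans_le hle, hx.2⟩ hle
  have hpeak_arg : (2 * (k : ℝ) + 1) * (π / (2 * k + 1)) = π := by field_simp
  simp only [hpeak_arg, cos_pi, neg_add_cancel, zero_div, add_zero] at hanti
  have hsin : 0 ≤ sin x := sin_nonneg_of_nonneg_of_le_pi hx.1 (by linarith [hx.2, pi_pos])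
  have hcos : 0 ≤ cos ((2 * k + 1) * x) + 1 := by linarith [neg_one_le_cos ((2 * k + 1) * x)]
  exact (le_add_of_nonneg_right (by positivity)).trans hanti

lemma antitoneOn_sin_div_self : AntitoneOn (fun x ↦ sin x / x) (Set.Ioc 0 π) := by
  have hslope := strictConcaveOn_sin_Icc.concaveOn.slope_anti (Set.left_mem_Icc.2 pi_pos.le)
  rw [Set.Icc_sdiff_left] at hslope
  simpa [slope_fun_def_field] using hslope

lemma monotoneOn_mul_sin_div {u : ℝ} (hu : u ∈ Set.Ioc 0 π) :
    MonotoneOn (fun a ↦ a * sin (u / a)) (Set.Ici 1) := by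
  intro a (ha : 1 ≤ a) b (hb : 1 ≤ b) hab
  have hu_pos := hu.1
  have hmem {c : ℝ} (hc : 1 ≤ c) : u / c ∈ Set.Ioc 0 π :=
    ⟨by positivity, (div_le_self hu_pos.le hc).trans hu.2⟩
  have hsin_div : sin (u / a) / (u / a) ≤ sin (u / b) / (u / b) :=
    antitoneOn_sin_div_self (hmem hb) (hmem ha) (by gcongr)
  calc a * sin (u / a) = u * (sin (u / a) / (u / a)) := by field_simp
    _ ≤ u * (sin (u / b) / (u / b)) := by gcongr
    _ = b * sin (u / b) := by field_simp

lemma sin_div_pos {u a : ℝ} (hu : u ∈ Set.Ioo 0 π) (ha : 1 ≤ a) : 0 < sin (u / a) :=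
  sin_pos_of_pos_of_lt_pi (div_pos hu.1 (by positivity)) ((div_le_self hu.1.le ha).trans_lt hu.2)

lemma hasDerivAt_dirichletPrimitive_div (k : ℕ) {u : ℝ} (hu : u ∈ Set.Ioo 0 π) :
    HasDerivAt (fun v ↦ dirichletPrimitive k (v / (2 * k + 1)))
      (sin u / ((2 * k + 1) * sin (u / (2 * k + 1)))) u := by
  have hsin : 0 < sin (u / (2 * k + 1)) := sin_div_pos hu (by simp)
  convert! (hasDerivAt_dirichletPrimitive k (u / (2 * k + 1))).comp u
    ((hasDerivAt_id u).div_const (2 * (k : ℝ) + 1)) using 1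
  rw [dirichletKernel_eq_div k hsin.ne', mul_div_cancel₀ u (by positivity)]
  field_simp

lemma antitone_dirichletPrimitive_div {u : ℝ} (hu : u ∈ Set.Icc 0 π) :
    Antitone fun k : ℕ ↦ dirichletPrimitive k (u / (2 * k + 1)) := by
  intro k l hkl
  have hmono : MonotoneOn (fun v ↦ dirichletPrimitive k (v / (2 * k + 1)) -
      dirichletPrimitive l (v / (2 * l + 1))) (Set.Icc 0 π) := by
    have hk := continuous_dirichletPrimitive k
    have hl := continuous_dirichletPrimitive l
    refine monotoneOn_of_hasDerivWithinAt_nonneg (convex_Icc _ _) (by fun_prop)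
      (fun v hv ↦ ((hasDerivAt_dirichletPrimitive_div k (by rwa [interior_Icc] at hv)).sub
        (hasDerivAt_dirichletPrimitive_div l
          (by rwa [interior_Icc] at hv))).hasDerivWithinAt) fun v hv ↦ sub_nonneg.2 ?_
    rw [interior_Icc] at hv
    have hsin : 0 < sin (v / (2 * k + 1)) := sin_div_pos hv (by simp)
    have hdenom : (2 * k + 1) * sin (v / (2 * k + 1)) ≤ (2 * l + 1) * sin (v / (2 * l + 1)) :=
      monotoneOn_mul_sin_div (Set.Ioo_subset_Ioc_self hv) (by simp) (by simp) (by gcongr)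
    exact div_le_div_of_nonneg_left (sin_pos_of_mem_Ioo hv).le (by positivity) hdenom
  have hsub := hmono ⟨le_rfl, pi_pos.le⟩ hu hu.1
  simp only [zero_div, dirichletPrimitive_zero, sub_self] at hsub
  exact sub_nonneg.1 hsub

lemma gOsc_two_mul_add_one (k : ℕ) {y : ℝ} (hy : y ∈ Set.Icc 0 (π / 2)) :
    gOsc (2 * k + 1) y = (dirichletPrimitive k (π / 2 - y) - π / 2) / 2 := by
  have hsq : (-1 : ℝ) ^ k * (-1) ^ k = 1 := by rw [← mul_pow]; simp
  have hintegrand : Set.EqOn (fun t ↦ cos ((2 * k + 1 : ℕ) * t) / (2 * cos t))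
      (fun t ↦ (-1) ^ k / 2 * dirichletKernel k (π / 2 - t)) (Set.Ioo 0 y) := fun t ht ↦ by
    have hcos : 0 < cos t :=
      cos_pos_of_mem_Ioo ⟨by linarith [ht.1, pi_pos], ht.2.trans_le hy.2⟩
    have hkernel := dirichletKernel_pi_div_two_sub_mul_cos k t
    push_cast
    rw [div_eq_iff (by positivity)]
    linear_combination (-(-1 : ℝ) ^ k) * hkernel - cos ((2 * k + 1) * t) * hsq
  have hsign : (2 * k + 1 + 1) / 2 = k + 1 := by lia
  rw [gOsc, hsign, integral_congr_Ioo_of_le hy.1 hintegrand, integral_const_mul,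
    integral_comp_sub_left (dirichletKernel k), integral_dirichletKernel, sub_zero,
    dirichletPrimitive_pi_div_two]
  linear_combination (-(π / 2 - dirichletPrimitive k (π / 2 - y)) / 2) * hsq

theorem gm_bound_general {m : ℕ} (hm : Odd m) (hm3 : 3 ≤ m) {y : ℝ}
    (hy : y ∈ Set.Icc 0 (π / 2)) : gOsc m y ≤ √3 / 4 - π / 12 := by
  obtain ⟨k, rfl⟩ := hm
  have hx : π / 2 - y ∈ Set.Icc 0 (π / 2) := ⟨by linarith [hy.2], by linarith [hy.1]⟩
  have hpeak : dirichletPrimitive k (π / 2 - y) ≤ π / 3 + √3 / 2 := calc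
    _ ≤ dirichletPrimitive k (π / (2 * k + 1)) := dirichletPrimitive_le_first_peak k hx
    _ ≤ dirichletPrimitive 1 (π / (2 * (1 : ℕ) + 1)) :=
      antitone_dirichletPrimitive_div ⟨pi_pos.le, le_rfl⟩ (by lia : 1 ≤ k)
    _ = dirichletPrimitive 1 (π / 3) := by norm_num
    _ = π / 3 + √3 / 2 := dirichletPrimitive_one_pi_div_three
  rw [gOsc_two_mul_add_one k hy]
  linarith

theorem gm_bound (m : ℕ) (hm : Odd m) (hm43 : 43 ≤ m)
    (y : ℝ) (hy : y ∈ Set.Icc 0 (Real.pi / 2)) :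
    gOsc m y ≤ 0.22 := by
  have hsqrt : √3 ≤ 1.74 := sqrt_le_iff.2 ⟨by norm_num, by norm_num⟩
  linarith [gm_bound_general hm (by lia) hy, pi_gt_d2]
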